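/- For every OCA A over a nonempty finite alphabet Σ there exists a deterministic OCA Ā over Σ such that L_obs(Ā) = (Σ×ℕ)* ∖ L_obs(A). -/

import Mathlib

/-! Common framework: one-counter automata (OCAs) over a finite alphabet,
with the classical (`oca`), visibly (`vis`) and observability (`obs`) semantics. -/

/-- Letters from an alphabet `α` together with the two counter operations
`inc` and `dec`. -/
inductive Vis (α : Type*) : Type _ where
  | sym : α → Vis α
  | inc : Vis α
  | dec : Vis α

/-- A one-counter automaton (an `m`-OCA) over alphabet `α` with state set `Q`:
an initial state, a set of final states, a threshold `m`, and a transition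
relation `Δ ⊆ Q × {0,…,m} × (α ∪ {inc,dec}) × Q`. -/
structure OCA (Q : Type*) (α : Type*) where
  init : Q
  final : Set Q
  m : ℕ
  Δ : Set (Q × ℕ × Vis α × Q)
  valid : ∀ t ∈ Δ, t.2.1 ≤ m

variable {Q α : Type*}

/-- One step of an OCA, labeled by an element of `(α × ℕ) ∪ {inc, dec}`. -/
def OCA.step (A : OCA Q α) : Q × ℕ → Vis (α × ℕ) → Q × ℕ → Prop
  | (q, x), Vis.inc, (q', x') => x' = x + 1 ∧ (q, min x A.m, Vis.inc, q') ∈ A.Δ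
  | (q, x), Vis.dec, (q', x') => 1 ≤ x ∧ x' = x - 1 ∧ (q, min x A.m, Vis.dec, q') ∈ A.Δ
  | (q, x), Vis.sym (a, y), (q', x') => y = x ∧ x' = x ∧ (q, min x A.m, Vis.sym a, q') ∈ A.Δ

/-- `A.RunFrom c ts cs` holds if there is a partial run of `A` starting in
configuration `c`, with trace `ts`, visiting exactly the configurations
listed in `cs` (starting with `c`). -/
inductive OCA.RunFrom (A : OCA Q α) : Q × ℕ → List (Vis (α × ℕ)) → List (Q × ℕ) → Prop
  | nil (c : Q × ℕ) : OCA.RunFrom A c [] [c]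
  | cons {c c' : Q × ℕ} {τ : Vis (α × ℕ)} {ts : List (Vis (α × ℕ))} {cs : List (Q × ℕ)} :
      A.step c τ c' → OCA.RunFrom A c' ts cs → OCA.RunFrom A c (τ :: ts) (c :: cs)

/-- `ts` is the trace of some accepting run of `A` (a run starting in the
initial configuration `(ι,0)` whose last configuration has a final state). -/
def OCA.AccTrace (A : OCA Q α) (ts : List (Vis (α × ℕ))) : Prop :=
  ∃ cs c, A.RunFrom (A.init, 0) ts cs ∧ cs.getLast? = some c ∧ c.1 ∈ A.final

/-- Projection of a trace letter used for the visibly semantics: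
`(a,x)` becomes `a`, and `inc`/`dec` are kept. -/
def visOf : Vis (α × ℕ) → Vis α
  | Vis.sym (a, _) => Vis.sym a
  | Vis.inc => Vis.inc
  | Vis.dec => Vis.dec

/-- The visibly projection of a trace. -/
def visMap (ts : List (Vis (α × ℕ))) : List (Vis α) := ts.map visOf

/-- The observability projection of a trace: keep the pairs `(a,x)`,
erase `inc`/`dec`. -/
def obsMap (ts : List (Vis (α × ℕ))) : List (α × ℕ) :=
  ts.filterMap fun τ => match τ with
    | Vis.sym p => some p
    | _ => none

/-- The classical projection of a trace: `(a,x)` becomes `a`,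
`inc`/`dec` are erased. -/
def ocaMap (ts : List (Vis (α × ℕ))) : List α :=
  ts.filterMap fun τ => match τ with
    | Vis.sym (a, _) => some a
    | _ => none

/-- The visibly semantics `L_vis(A)`. -/
def OCA.Lvis (A : OCA Q α) : Set (List (Vis α)) :=
  {w | ∃ ts, A.AccTrace ts ∧ visMap ts = w}

/-- The observability semantics `L_obs(A)`. -/
def OCA.Lobs (A : OCA Q α) : Set (List (α × ℕ)) :=
  {w | ∃ ts, A.AccTrace ts ∧ obsMap ts = w}

/-- The classical semantics `L_oca(A)`. -/
def OCA.Loca (A : OCA Q α) : Set (List α) :=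
  {w | ∃ ts, A.AccTrace ts ∧ ocaMap ts = w}

/-- An OCA is deterministic if for every state `q`, counter test `k ≤ m` and
letter `σ ∈ α ∪ {inc,dec}` there is exactly one target state. -/
def OCA.Deterministic (A : OCA Q α) : Prop :=
  ∀ (q : Q) (k : ℕ) (σ : Vis α), k ≤ A.m → ∃! q' : Q, (q, k, σ, q') ∈ A.Δ

/-- Test for the letter `inc`. -/
def isIncB : Vis α → Bool
  | Vis.inc => true
  | _ => false

/-- Test for the letter `dec`. -/
def isDecB : Vis α → Bool
  | Vis.dec => true
  | _ => false

/-- Well-formed words over `α ∪ {inc,dec}`: no prefix contains more `dec`'s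
than `inc`'s. -/
def WFWords (α : Type*) : Set (List (Vis α)) :=
  {w | ∀ p, p <+: w → p.countP isDecB ≤ p.countP isIncB}

/-- `encFrom x0 w` encodes `w ∈ (α × ℕ)*` starting from previous counter
value `x0`: each `(a,x)` becomes `inc^(x-x0) a` (if `x ≥ x0`) or
`dec^(x0-x) a` (otherwise). -/
def encFrom : ℕ → List (α × ℕ) → List (Vis α)
  | _, [] => []
  | x0, (a, x) :: w =>
      (if x0 ≤ x then List.replicate (x - x0) Vis.inc
       else List.replicate (x0 - x) Vis.dec) ++ Vis.sym a :: encFrom x w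

/-- The encoding `enc : (α × ℕ)* → (α ∪ {inc,dec})*`. -/
def enc (w : List (α × ℕ)) : List (Vis α) := encFrom 0 w

/-- The set `Enc_α` of valid encodings. -/
def EncSet (α : Type*) : Set (List (Vis α)) := Set.range (enc (α := α))

/-- A set `S ⊆ ℕ` is ultimately periodic if there are `t` and `d ≥ 1` such
that for all `x ≥ t`, `x ∈ S ↔ x + d ∈ S`. -/
def UltPeriodic (S : Set ℕ) : Prop :=
  ∃ t d : ℕ, 1 ≤ d ∧ ∀ x : ℕ, t ≤ x → (x ∈ S ↔ x + d ∈ S)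

/-- An extended OCA (eOCA): transitions are guarded by ultimately periodic
sets of counter values, and acceptance is given by an ultimately periodic set
of counter values for each state. -/
structure EOCA (Q : Type*) (α : Type*) where
  init : Q
  f : Q → Set ℕ
  hf : ∀ q, UltPeriodic (f q)
  Δ : Set (Q × Set ℕ × Vis α × Q)
  hΔfin : Δ.Finite
  hΔup : ∀ t ∈ Δ, UltPeriodic t.2.1

/-- One step of an eOCA. -/
def EOCA.step (A : EOCA Q α) : Q × ℕ → Vis (α × ℕ) → Q × ℕ → Prop
  | (q, x), Vis.inc, (q', x') =>
      x' = x + 1 ∧ ∃ S, (q, S, Vis.inc, q') ∈ A.Δ ∧ x ∈ S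
  | (q, x), Vis.dec, (q', x') =>
      1 ≤ x ∧ x' = x - 1 ∧ ∃ S, (q, S, Vis.dec, q') ∈ A.Δ ∧ x ∈ S
  | (q, x), Vis.sym (a, y), (q', x') =>
      y = x ∧ x' = x ∧ ∃ S, (q, S, Vis.sym a, q') ∈ A.Δ ∧ x ∈ S

/-- Partial runs of an eOCA, as for OCAs. -/
inductive EOCA.RunFrom (A : EOCA Q α) : Q × ℕ → List (Vis (α × ℕ)) → List (Q × ℕ) → Prop
  | nil (c : Q × ℕ) : EOCA.RunFrom A c [] [c]
  | cons {c c' : Q × ℕ} {τ : Vis (α × ℕ)} {ts : List (Vis (α × ℕ))} {cs : List (Q × ℕ)} :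
      A.step c τ c' → EOCA.RunFrom A c' ts cs → EOCA.RunFrom A c (τ :: ts) (c :: cs)

/-- Accepting traces of an eOCA: the last configuration `(q,x)` satisfies
`x ∈ f q`. -/
def EOCA.AccTrace (A : EOCA Q α) (ts : List (Vis (α × ℕ))) : Prop :=
  ∃ cs c, A.RunFrom (A.init, 0) ts cs ∧ cs.getLast? = some c ∧ c.2 ∈ A.f c.1

/-- The visibly semantics of an eOCA. -/
def EOCA.Lvis (A : EOCA Q α) : Set (List (Vis α)) :=
  {w | ∃ ts, A.AccTrace ts ∧ visMap ts = w}

/-- The observability semantics of an eOCA. -/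
def EOCA.Lobs (A : EOCA Q α) : Set (List (α × ℕ)) :=
  {w | ∃ ts, A.AccTrace ts ∧ obsMap ts = w}

/-- The classical semantics of an eOCA. -/
def EOCA.Loca (A : EOCA Q α) : Set (List α) :=
  {w | ∃ ts, A.AccTrace ts ∧ ocaMap ts = w}

/-!
Between two observed letters a run of `A` only moves its counter, so what `A` can do after a word is
determined by the set of states it can have at each level. The complement automaton performs a
subset construction along the canonical trace of a word, the one in which the counter goes straight
from each observed value to the next: since the counter changes by one at a time, every run of `A`
between two levels crosses all levels in between, and the set of states of `A` at the current level
is computed from the one at the preceding level. Traces that change direction between two letters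
are rejected.

This update saturates by silent loops at the current level `x`, which may leave `x` in either
direction, so it depends on the exact value of `x`. Above the threshold, however, the part of the
loop relation below level `x + 1` is a function of the part below level `x`, and the full relation
is another function of it. By the pigeonhole principle both are ultimately periodic in `x`, and a
deterministic automaton evaluates them from a counter test and the counter value modulo the period.
-/

universe u v

open Relation Set

/-! ### Preliminaries -/

theorem exists_step_out_of_reflTransGen {C : Type*} {R : C → C → Prop} {a b : C}
    (h : ReflTransGen R a b) {S : Set C} (ha : a ∈ S) (hb : b ∉ S) :
    ∃ c ∈ S, ∃ c' ∉ S, ReflTransGen R a c ∧ R c c' ∧ ReflTransGen R c' b := by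
  induction h with
  | refl => exact absurd ha hb
  | @tail b b' hab hbb' ih =>
    by_cases hbS : b ∈ S
    · exact ⟨b, hbS, b', hb, hab, hbb', .refl⟩
    · obtain ⟨c, hc, c', hc', hac, hcc', hcb⟩ := ih hbS
      exact ⟨c, hc, c', hc', hac, hcc', hcb.tail hbb'⟩

theorem exists_eventually_periodic_of_finite {X : Type*} [Finite X] (f : ℕ → X) (m : ℕ)
    (hf : ∀ x y, m ≤ x → m ≤ y → f x = f y → f (x + 1) = f (y + 1)) :
    ∃ t d, m ≤ t ∧ 0 < d ∧ ∀ x, t ≤ x → f (x + d) = f x := by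
  obtain ⟨t, ht, s, -, hts, hfts⟩ :=
    (Ici_infinite m).exists_lt_map_eq_of_mapsTo (mapsTo_univ f _) finite_univ
  refine ⟨t, s - t, ht, by omega, fun x hx => ?_⟩
  induction x, hx using Nat.le_induction with
  | base => rw [Nat.add_sub_cancel' hts.le, hfts]
  | succ x hx ih =>
    rw [Nat.add_right_comm]
    exact hf _ _ (ht.trans (by omega)) (ht.trans hx) ih

/-- The information about a level `x` that an automaton with threshold `t` has when it keeps track
of its counter modulo `d`. -/
def levelClass (t d x : ℕ) : ℕ × ZMod d := (min x t, x)

theorem factorsThrough_levelClass {X : Type*} {f : ℕ → X} {t d : ℕ}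
    (hf : ∀ x, t ≤ x → f (x + d) = f x) : f.FactorsThrough (levelClass t d) := by
  intro x y hxy
  obtain ⟨hmin, hmod⟩ := Prod.mk.inj hxy
  rcases lt_or_ge x t with hx | hx
  · rw [show x = y by omega]
  obtain ⟨i, rfl⟩ := Nat.exists_eq_add_of_le hx
  obtain ⟨j, rfl⟩ := Nat.exists_eq_add_of_le (show t ≤ y by omega)
  have hper : Function.Periodic (fun n => f (t + n)) d := fun n => by
    simp only [← Nat.add_assoc, hf _ (Nat.le_add_right t n)]
  have hij : i % d = j % d := ((ZMod.natCast_eq_natCast_iff _ _ _).1 hmod).add_left_cancel' t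
  calc f (t + i) = f (t + i % d) := (hper.map_mod_nat i).symm
    _ = f (t + j % d) := by rw [hij]
    _ = f (t + j) := hper.map_mod_nat j

/-! ### Observations of labelled transition systems -/

namespace Vis

/-- The counter value after a letter is read at a given counter value; only meaningful where the
letter is enabled, since `dec` at `0` stays at `0`. -/
def nextLevel : Vis α → ℕ → ℕ
  | inc, x => x + 1
  | dec, x => x - 1
  | sym _, x => x

/-- `τ.Enabled x`: the trace letter `τ` is compatible with the counter value `x`. -/
def Enabled : Vis (α × ℕ) → ℕ → Prop
  | inc, _ => True
  | dec, x => 1 ≤ x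
  | sym (_, y), x => y = x

/-- The change of a counter kept modulo `d`. -/
def nextPhase {d : ℕ} : Vis α → ZMod d → ZMod d
  | inc, c => c + 1
  | dec, c => c - 1
  | sym _, c => c

theorem natCast_nextLevel {d x : ℕ} {τ : Vis (α × ℕ)} (h : τ.Enabled x) :
    (((visOf τ).nextLevel x : ℕ) : ZMod d) = (visOf τ).nextPhase (x : ZMod d) := by
  rcases τ with _ | _ | _
  · rfl
  · exact Nat.cast_succ x
  · exact Nat.cast_pred h

end Vis

/-- `ObsReach R c₀ w c`: the configuration `c` can be reached from `c₀` by a path of the labelled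
transition system `R` whose trace has the observation `w`. -/
inductive ObsReach {C : Type*} (R : C → Vis (α × ℕ) → C → Prop) (c₀ : C) :
    List (α × ℕ) → C → Prop
  | init : ObsReach R c₀ [] c₀
  | tail {w : List (α × ℕ)} {c c' : C} {τ : Vis (α × ℕ)} :
      ObsReach R c₀ w c → R c τ c' → ObsReach R c₀ (w ++ obsMap [τ]) c'

namespace ObsReach

variable {C C' : Type*} {R : C → Vis (α × ℕ) → C → Prop} {c₀ c c' : C} {w : List (α × ℕ)}

theorem tail_inc (h : ObsReach R c₀ w c) (hR : R c .inc c') : ObsReach R c₀ w c' := by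
  simpa only [obsMap, List.filterMap, List.append_nil] using h.tail hR

theorem tail_dec (h : ObsReach R c₀ w c) (hR : R c .dec c') : ObsReach R c₀ w c' := by
  simpa only [obsMap, List.filterMap, List.append_nil] using h.tail hR

theorem map_iff {R' : C' → Vis (α × ℕ) → C' → Prop} {f : C → C'}
    (hf : ∀ c τ c'', R' (f c) τ c'' ↔ ∃ c', R c τ c' ∧ f c' = c'') {c'' : C'} :
    ObsReach R' (f c₀) w c'' ↔ ∃ c, ObsReach R c₀ w c ∧ f c = c'' := by
  constructor
  · intro h
    induction h with
    | init => exact ⟨c₀, init, rfl⟩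
    | tail _ hR ih =>
      obtain ⟨c, hc, rfl⟩ := ih
      obtain ⟨c', hcc', rfl⟩ := (hf _ _ _).1 hR
      exact ⟨c', hc.tail hcc', rfl⟩
  · rintro ⟨c, hc, rfl⟩
    induction hc with
    | init => exact init
    | tail _ hR ih => exact ih.tail ((hf _ _ _).2 ⟨_, hR, rfl⟩)

end ObsReach

namespace OCA

variable {A : OCA Q α}

theorem step_iff {c c' : Q × ℕ} {τ : Vis (α × ℕ)} :
    A.step c τ c' ↔ τ.Enabled c.2 ∧ c'.2 = (visOf τ).nextLevel c.2 ∧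
      (c.1, min c.2 A.m, visOf τ, c'.1) ∈ A.Δ := by
  rcases τ with ⟨a, y⟩ | _ | _
  · exact Iff.rfl
  · exact (iff_of_eq (true_and _)).symm
  · exact Iff.rfl

namespace RunFrom

variable {c c' c'' : Q × ℕ} {ts : List (Vis (α × ℕ))} {cs : List (Q × ℕ)}

theorem ne_nil (h : A.RunFrom c ts cs) : cs ≠ [] := by
  cases h <;> exact List.cons_ne_nil _ _

theorem snoc (h : A.RunFrom c ts cs) (hlast : cs.getLast? = some c') {τ : Vis (α × ℕ)}
    (hstep : A.step c' τ c'') : A.RunFrom c (ts ++ [τ]) (cs ++ [c'']) := by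
  induction h with
  | nil c =>
    obtain rfl : c = c' := Option.some.inj hlast
    exact .cons hstep (.nil c'')
  | cons hs hr ih =>
    rw [List.getLast?_cons_of_ne_nil hr.ne_nil] at hlast
    exact .cons hs (ih hlast)

theorem obsReach (h : A.RunFrom c ts cs) (hlast : cs.getLast? = some c') {c₀ : Q × ℕ}
    {w : List (α × ℕ)} (hc : ObsReach A.step c₀ w c) :
    ObsReach A.step c₀ (w ++ obsMap ts) c' := by
  induction h generalizing w with
  | nil c =>
    obtain rfl : c = c' := Option.some.inj hlast
    rwa [obsMap, List.filterMap_nil, List.append_nil]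
  | @cons _ _ τ ts _ hs hr ih =>
    rw [List.getLast?_cons_of_ne_nil hr.ne_nil] at hlast
    have hcons : obsMap (τ :: ts) = obsMap [τ] ++ obsMap ts :=
      List.filterMap_append (l := [τ]) (l' := ts)
    rw [hcons, ← List.append_assoc]
    exact ih hlast (hc.tail hs)

end RunFrom

theorem exists_runFrom_of_obsReach {c c' : Q × ℕ} {w : List (α × ℕ)}
    (h : ObsReach A.step c w c') :
    ∃ ts cs, A.RunFrom c ts cs ∧ cs.getLast? = some c' ∧ obsMap ts = w := by
  induction h with
  | init => exact ⟨[], [c], .nil c, rfl, rfl⟩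
  | @tail _ _ c' τ _ hstep ih =>
    obtain ⟨ts, cs, hrun, hlast, rfl⟩ := ih
    exact ⟨ts ++ [τ], cs ++ [c'], hrun.snoc hlast hstep, List.getLast?_concat,
      List.filterMap_append⟩

theorem mem_Lobs_iff {w : List (α × ℕ)} :
    w ∈ A.Lobs ↔ ∃ c, ObsReach A.step (A.init, 0) w c ∧ c.1 ∈ A.final := by
  constructor
  · rintro ⟨ts, ⟨cs, c, hrun, hlast, hfinal⟩, rfl⟩
    exact ⟨c, hrun.obsReach hlast .init, hfinal⟩
  · rintro ⟨c, hc, hfinal⟩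
    obtain ⟨ts, cs, hrun, hlast, hobs⟩ := exists_runFrom_of_obsReach hc
    exact ⟨ts, ⟨cs, c, hrun, hlast, hfinal⟩, hobs⟩

end OCA

/-! ### Deterministic devices with full access to the counter -/

/-- A deterministic automaton whose transitions may depend on the exact counter value. -/
structure LevelDFA (P α : Type*) where
  start : P
  accept : Set P
  next : ℕ → Vis α → P → P

namespace LevelDFA

variable {P : Type*} (D : LevelDFA P α)

/-- One step of a `LevelDFA`, with the trace letters of `OCA.step`. -/
def step (c : P × ℕ) (τ : Vis (α × ℕ)) (c' : P × ℕ) : Prop :=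
  τ.Enabled c.2 ∧ c' = (D.next c.2 (visOf τ) c.1, (visOf τ).nextLevel c.2)

/-- The observability semantics of a `LevelDFA`. -/
def Lobs : Set (List (α × ℕ)) :=
  {w | ∃ c, ObsReach D.step (D.start, 0) w c ∧ c.1 ∈ D.accept}

/-- The transition function of `toOCA`, at a level with counter test `k`. The second component of a
state is the counter modulo `d`; where `(k, s.2)` is not the class of a level, the first component
is left unchanged. -/
noncomputable def toOCANext (t d : ℕ) (s : P × ZMod d) (k : ℕ) (σ : Vis α) : P × ZMod d :=
  (Function.extend (levelClass t d) D.next (fun _ _ p => p) (k, s.2) σ s.1, σ.nextPhase s.2)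

/-- The OCA with threshold `t` that keeps its counter modulo `d` in its states and simulates `D`,
provided that `D.next` factors through `levelClass t d`. -/
def toOCA (t d : ℕ) : OCA (P × ZMod d) α where
  init := (D.start, 0)
  final := {s | s.1 ∈ D.accept}
  m := t
  Δ := {e | e.2.1 ≤ t ∧ e.2.2.2 = D.toOCANext t d e.1 e.2.1 e.2.2.1}
  valid _ he := he.1

theorem toOCA_deterministic (t d : ℕ) : (D.toOCA t d).Deterministic :=
  fun s k σ hk => ⟨D.toOCANext t d s k σ, ⟨hk, rfl⟩, fun _ hs => hs.2⟩

variable {D} {t d : ℕ}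

theorem toOCANext_eq (hD : ∀ x, t ≤ x → D.next (x + d) = D.next x) (p : P) {x : ℕ}
    {τ : Vis (α × ℕ)} (hτ : τ.Enabled x) :
    D.toOCANext t d (p, (x : ZMod d)) (min x t) (visOf τ) =
      (D.next x (visOf τ) p, (((visOf τ).nextLevel x : ℕ) : ZMod d)) := by
  have hnext : Function.extend (levelClass t d) D.next (fun _ _ p => p) (min x t, (x : ZMod d)) =
      D.next x := (factorsThrough_levelClass hD).extend_apply _ x
  rw [toOCANext, hnext, Vis.natCast_nextLevel hτ]

theorem toOCA_step_iff (hD : ∀ x, t ≤ x → D.next (x + d) = D.next x) {c : P × ℕ}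
    {τ : Vis (α × ℕ)} {c'' : (P × ZMod d) × ℕ} :
    (D.toOCA t d).step ((c.1, (c.2 : ZMod d)), c.2) τ c'' ↔
      ∃ c', D.step c τ c' ∧ ((c'.1, (c'.2 : ZMod d)), c'.2) = c'' := by
  rw [OCA.step_iff]
  constructor
  · rintro ⟨hτ, hlevel, -, hstate⟩
    exact ⟨_, ⟨hτ, rfl⟩, Prod.ext (hstate.trans (toOCANext_eq hD c.1 hτ)).symm hlevel.symm⟩
  · rintro ⟨_, ⟨hτ, rfl⟩, rfl⟩
    exact ⟨hτ, rfl, min_le_right _ _, (toOCANext_eq hD c.1 hτ).symm⟩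

theorem toOCA_Lobs (hD : ∀ x, t ≤ x → D.next (x + d) = D.next x) :
    (D.toOCA t d).Lobs = D.Lobs := by
  ext w
  have hmap {c''} := ObsReach.map_iff (c₀ := (D.start, 0)) (w := w) (c'' := c'')
    fun _ _ _ => toOCA_step_iff hD
  rw [Nat.cast_zero] at hmap
  rw [OCA.mem_Lobs_iff]
  constructor
  · rintro ⟨_, hc, hfinal⟩
    obtain ⟨c, hDc, rfl⟩ := hmap.1 hc
    exact ⟨c, hDc, hfinal⟩
  · rintro ⟨c, hc, hacc⟩
    exact ⟨_, hmap.2 ⟨c, hc, rfl⟩, hacc⟩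

end LevelDFA

theorem LevelDFA.exists_deterministic_Lobs_eq {P : Type v} [Finite P] (D : LevelDFA P α) {t d : ℕ}
    (hd : 0 < d) (hD : ∀ x, t ≤ x → D.next (x + d) = D.next x) :
    ∃ (Q' : Type v) (_ : Fintype Q') (A' : OCA Q' α), A'.Deterministic ∧ A'.Lobs = D.Lobs :=
  have : NeZero d := ⟨hd.ne'⟩
  ⟨P × ZMod d, Fintype.ofFinite _, D.toOCA t d, D.toOCA_deterministic t d, D.toOCA_Lobs hD⟩

/-! ### Silent moves and their periodicity -/

namespace OCA

/-- A silent move: one step of `A` that changes the counter. -/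
def Move (A : OCA Q α) (c c' : Q × ℕ) : Prop := A.step c .inc c' ∨ A.step c .dec c'

/-- Reachability by silent moves between levels in `L`. -/
def SilentReach (A : OCA Q α) (L : Set ℕ) : Q × ℕ → Q × ℕ → Prop :=
  ReflTransGen fun c c' => A.Move c c' ∧ c.2 ∈ L ∧ c'.2 ∈ L

/-- `A.Loop L x p q`: from state `p` at level `x`, silent moves inside `L` lead to state `q` at the
same level. -/
def Loop (A : OCA Q α) (L : Set ℕ) (x : ℕ) (p q : Q) : Prop := A.SilentReach L (p, x) (q, x)

/-- `A.Drift L x p q`: from state `p` at level `x`, silent moves inside `L` lead to state `q` at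
some level. -/
def Drift (A : OCA Q α) (L : Set ℕ) (x : ℕ) (p q : Q) : Prop :=
  ∃ z, A.SilentReach L (p, x) (q, z)

/-- The loop and drift relations at a level. -/
def profile (A : OCA Q α) (L : Set ℕ) (x : ℕ) : (Q → Q → Prop) × (Q → Q → Prop) :=
  (A.Loop L x, A.Drift L x)

variable {A : OCA Q α} {x y : ℕ} {L L' : Set ℕ}

theorem move_iff {p q : Q} : A.Move (p, x) (q, y) ↔
    (y = x + 1 ∧ (p, min x A.m, .inc, q) ∈ A.Δ) ∨
      (x = y + 1 ∧ (p, min x A.m, .dec, q) ∈ A.Δ) := by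
  have hlevel : (1 ≤ x ∧ y = x - 1) ↔ x = y + 1 := by omega
  exact or_congr Iff.rfl (by rw [← hlevel, and_assoc]; rfl)

theorem Move.level {c c' : Q × ℕ} (h : A.Move c c') : c'.2 = c.2 + 1 ∨ c.2 = c'.2 + 1 :=
  (move_iff.1 h).imp And.left And.left

theorem Move.shift {p q : Q} {i j : ℕ} (hx : A.m ≤ x) (hy : A.m ≤ y)
    (h : A.Move (p, x + i) (q, x + j)) : A.Move (p, y + i) (q, y + j) := by
  rw [move_iff, min_eq_right (by omega)] at h ⊢
  exact h.imp (And.imp_left fun _ => by omega) (And.imp_left fun _ => by omega)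

theorem SilentReach.mono (hL : L ⊆ L') {c c' : Q × ℕ} (h : A.SilentReach L c c') :
    A.SilentReach L' c c' :=
  ReflTransGen.mono (fun _ _ h => ⟨h.1, hL h.2.1, hL h.2.2⟩) _ _ h

/-- A silent path from a level `≥ x` can be transported to the levels around `y`: the parts above
`x` are translated, and each completed excursion below `x` is replaced by one below `y`. An
excursion that is still under way is kept as a path of its own. -/
theorem SilentReach.shift (hx : A.m ≤ x) (hy : A.m ≤ y) (hL : ∀ i, x + i ∈ L → y + i ∈ L')
    (hL' : Iic y ⊆ L') (hloop : A.Loop (Iic x) x ≤ A.Loop (Iic y) y) {p : Q} {i : ℕ} {c : Q × ℕ}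
    (h : A.SilentReach L (p, x + i) c) :
    (∃ j, c.2 = x + j ∧ A.SilentReach L' (p, y + i) (c.1, y + j)) ∨
      (c.2 < x ∧ ∃ r, A.SilentReach L' (p, y + i) (r, y) ∧ A.SilentReach (Iic x) (r, x) c) := by
  induction h with
  | refl => exact .inl ⟨i, rfl, .refl⟩
  | @tail b c _ hbc ih =>
    obtain ⟨q, z⟩ := b
    obtain ⟨q', z'⟩ := c
    obtain ⟨hmove, hz, hz'⟩ := hbc
    have hlevel : z' = z + 1 ∨ z = z' + 1 := hmove.level
    rcases ih with ⟨j, rfl : z = x + j, hq⟩ | ⟨hzx : z < x, r, hr, hq⟩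
    · by_cases hx' : x ≤ z'
      · obtain ⟨j', rfl⟩ := Nat.exists_eq_add_of_le hx'
        exact .inl ⟨j', rfl, hq.tail ⟨hmove.shift hx hy, hL j hz, hL j' hz'⟩⟩
      · obtain rfl : j = 0 := by omega
        exact .inr ⟨not_le.1 hx', q, hq, .single ⟨hmove, le_refl x, (not_le.1 hx').le⟩⟩
    · have hz'x : z' ≤ x := by omega
      have hq' : A.SilentReach (Iic x) (r, x) (q', z') := hq.tail ⟨hmove, hzx.le, hz'x⟩
      rcases hz'x.lt_or_eq with hlt | rfl
      · exact .inr ⟨hlt, r, hr, hq'⟩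
      · exact .inl ⟨0, rfl, hr.trans (SilentReach.mono hL' (hloop r q' hq'))⟩

theorem profile_le_of_profile_Iic_le (hx : A.m ≤ x) (hy : A.m ≤ y)
    (hL : ∀ i, x + i ∈ L → y + i ∈ L') (hL' : Iic y ⊆ L')
    (h : A.profile (Iic x) x ≤ A.profile (Iic y) y) (i : ℕ) :
    A.profile L (x + i) ≤ A.profile L' (y + i) := by
  constructor
  · intro p q hpq
    rcases SilentReach.shift hx hy hL hL' h.1 hpq with ⟨j, hj, hq⟩ | ⟨hlt, -⟩
    · obtain rfl : i = j := Nat.add_left_cancel hj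
      exact hq
    · exact absurd hlt (Nat.le_add_right x i).not_gt
  · rintro p q ⟨z, hpq⟩
    rcases SilentReach.shift hx hy hL hL' h.1 hpq with ⟨j, -, hq⟩ | ⟨-, r, hr, hq⟩
    · exact ⟨y + j, hq⟩
    · obtain ⟨z', hz'⟩ := h.2 r q ⟨z, hq⟩
      exact ⟨z', hr.trans (hz'.mono hL')⟩

theorem profile_eq_of_profile_Iic_eq (hx : A.m ≤ x) (hy : A.m ≤ y)
    (hL : ∀ i, x + i ∈ L ↔ y + i ∈ L') (hxL : Iic x ⊆ L) (hyL' : Iic y ⊆ L')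
    (h : A.profile (Iic x) x = A.profile (Iic y) y) (i : ℕ) :
    A.profile L (x + i) = A.profile L' (y + i) :=
  (profile_le_of_profile_Iic_le hx hy (fun j => (hL j).1) hyL' h.le i).antisymm
    (profile_le_of_profile_Iic_le hy hx (fun j => (hL j).2) hxL h.ge i)

theorem exists_profile_periodic [Finite Q] (A : OCA Q α) :
    ∃ t d, A.m ≤ t ∧ 0 < d ∧ ∀ x, t ≤ x → A.profile univ (x + d) = A.profile univ x := by
  obtain ⟨t, d, ht, hd, hper⟩ :=
    exists_eventually_periodic_of_finite (fun x => A.profile (Iic x) x) A.m fun x y hx hy h =>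
      profile_eq_of_profile_Iic_eq hx hy (fun i => by simp only [mem_Iic]; omega)
        (Iic_subset_Iic.2 x.le_succ) (Iic_subset_Iic.2 y.le_succ) h 1
  exact ⟨t, d, ht, hd, fun x hx =>
    profile_eq_of_profile_Iic_eq (x := x + d) (y := x) (by omega) (by omega) (fun _ => Iff.rfl)
      (subset_univ _) (subset_univ _) (hper x hx) 0⟩

end OCA

/-! ### The states reached at a level -/

/-- The last observed counter value, and `0` for the empty word. -/
def lastLevel (w : List (α × ℕ)) : ℕ := (w.map Prod.snd).getLastD 0

theorem lastLevel_concat (w : List (α × ℕ)) (a : α) (y : ℕ) : lastLevel (w ++ [(a, y)]) = y := by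
  rw [lastLevel, List.map_append, List.map_singleton, List.getLastD_concat]

namespace OCA

/-- The states that `A` can have at level `x` after observing `w`. -/
def statesAt (A : OCA Q α) (w : List (α × ℕ)) (x : ℕ) : Set Q :=
  {p | ObsReach A.step (A.init, 0) w (p, x)}

/-- The states reached from a set `T` of states at level `x` by reading the letter `σ` and then
looping silently. -/
def advance (A : OCA Q α) (x : ℕ) (σ : Vis α) (T : Set Q) : Set Q :=
  {q | ∃ p ∈ T, ∃ r, (p, min x A.m, σ, r) ∈ A.Δ ∧ A.Loop univ (σ.nextLevel x) r q}

variable {A : OCA Q α} {w : List (α × ℕ)} {c c' : Q × ℕ} {x : ℕ}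

theorem obsReach_of_silentReach {c₀ : Q × ℕ} (h : ObsReach A.step c₀ w c)
    (hc : A.SilentReach univ c c') : ObsReach A.step c₀ w c' := by
  induction hc with
  | refl => exact h
  | tail _ hmove ih => exact hmove.1.elim ih.tail_inc ih.tail_dec

theorem exists_silentReach_from_lastLevel (h : ObsReach A.step (A.init, 0) w c) :
    ∃ p ∈ A.statesAt w (lastLevel w), A.SilentReach univ (p, lastLevel w) c := by
  induction h with
  | init => exact ⟨A.init, .init, .refl⟩
  | @tail w c c' τ hc hstep ih =>
    obtain ⟨p, hp, hpc⟩ := ih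
    rcases τ with ⟨a, y⟩ | _ | _
    · have hy : lastLevel (w ++ [(a, y)]) = c'.2 := by
        rw [lastLevel_concat, hstep.1, hstep.2.1]
      refine ⟨c'.1, ?_, ?_⟩
      · exact hy ▸ hc.tail hstep
      · exact hy ▸ .refl
    · simp only [obsMap, List.filterMap, List.append_nil]
      exact ⟨p, hp, hpc.tail ⟨.inl hstep, trivial, trivial⟩⟩
    · simp only [obsMap, List.filterMap, List.append_nil]
      exact ⟨p, hp, hpc.tail ⟨.inr hstep, trivial, trivial⟩⟩

theorem exists_silentReach_from_letter {a : α} {y : ℕ}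
    (h : ObsReach A.step (A.init, 0) (w ++ [(a, y)]) c) :
    ∃ p ∈ A.statesAt w y, ∃ r, (p, min y A.m, .sym a, r) ∈ A.Δ ∧
      A.SilentReach univ (r, y) c := by
  generalize hv : w ++ [(a, y)] = v at h
  induction h with
  | init => exact absurd hv (by simp)
  | @tail v c c' τ hc hstep ih =>
    rcases τ with ⟨b, z⟩ | _ | _
    · obtain ⟨rfl, hletter⟩ := List.append_inj' hv rfl
      obtain ⟨rfl, rfl⟩ : a = b ∧ y = z := by simpa [obsMap] using hletter
      obtain ⟨rfl, hlevel, htrans⟩ := hstep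
      refine ⟨c.1, hc, c'.1, htrans, ?_⟩
      rw [← hlevel]
      exact .refl
    · obtain ⟨p, hp, r, hr, hrc⟩ := ih (hv.trans (List.append_nil v))
      exact ⟨p, hp, r, hr, hrc.tail ⟨.inl hstep, trivial, trivial⟩⟩
    · obtain ⟨p, hp, r, hr, hrc⟩ := ih (hv.trans (List.append_nil v))
      exact ⟨p, hp, r, hr, hrc.tail ⟨.inr hstep, trivial, trivial⟩⟩

theorem advance_statesAt_subset {τ : Vis (α × ℕ)} (hτ : τ.Enabled x) :
    A.advance x (visOf τ) (A.statesAt w x) ⊆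
      A.statesAt (w ++ obsMap [τ]) ((visOf τ).nextLevel x) := by
  rintro q ⟨p, hp, r, hr, hrq⟩
  exact obsReach_of_silentReach
    (ObsReach.tail hp (step_iff.2 ⟨hτ, rfl, hr⟩ : A.step (p, x) τ (r, _))) hrq

theorem advance_sym_statesAt (a : α) :
    A.advance x (.sym a) (A.statesAt w x) = A.statesAt (w ++ [(a, x)]) x :=
  (advance_statesAt_subset (τ := .sym (a, x)) rfl).antisymm fun _ hq =>
    exists_silentReach_from_letter hq

theorem advance_inc_statesAt (hx : lastLevel w ≤ x) :
    A.advance x .inc (A.statesAt w x) = A.statesAt w (x + 1) := by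
  refine Subset.antisymm ?_ fun q hq => ?_
  · simpa only [obsMap, List.filterMap, List.append_nil, visOf, Vis.nextLevel] using
      advance_statesAt_subset (A := A) (w := w) (x := x) (τ := .inc) trivial
  obtain ⟨p, hp, hpq⟩ := exists_silentReach_from_lastLevel hq
  obtain ⟨⟨r, z⟩, hz, ⟨r', z'⟩, hz', hpr, hmove, hr'q⟩ :=
    exists_step_out_of_reflTransGen hpq (S := {c | c.2 ≤ x}) hx (Nat.not_succ_le_self x)
  simp only [mem_ofPred_eq] at hz hz'
  obtain ⟨rfl, hr⟩ | ⟨h, -⟩ := move_iff.1 hmove.1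
  · obtain rfl : z = x := by omega
    exact ⟨r, obsReach_of_silentReach hp hpr, r', hr, hr'q⟩
  · omega

theorem advance_dec_statesAt (hx : x + 1 ≤ lastLevel w) :
    A.advance (x + 1) .dec (A.statesAt w (x + 1)) = A.statesAt w x := by
  refine Subset.antisymm ?_ fun q hq => ?_
  · simpa only [obsMap, List.filterMap, List.append_nil, visOf, Vis.nextLevel,
      Nat.add_sub_cancel] using
      advance_statesAt_subset (A := A) (w := w) (τ := .dec) (Nat.le_add_left 1 x)
  obtain ⟨p, hp, hpq⟩ := exists_silentReach_from_lastLevel hq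
  obtain ⟨⟨r, z⟩, hz, ⟨r', z'⟩, hz', hpr, hmove, hr'q⟩ :=
    exists_step_out_of_reflTransGen hpq (S := {c | x + 1 ≤ c.2}) hx (Nat.not_succ_le_self x)
  simp only [mem_ofPred_eq] at hz hz'
  obtain ⟨h, -⟩ | ⟨rfl, hr⟩ := move_iff.1 hmove.1
  · omega
  · obtain rfl : z' = x := by omega
    exact ⟨r, obsReach_of_silentReach hp hpr, r', hr, hr'q⟩

end OCA

/-! ### The complement device -/

/-- The states of the complement device. The flags `mayInc` and `mayDec` tell in which directions
the counter can still be moved before the next letter; both are set right after a letter, and a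
state in which neither is set is dead. The set `here` holds the states that the original automaton
can have at the current level, and `anywhere` those that it can have after further silent moves. -/
structure Tracker (Q : Type*) where
  mayInc : Prop
  mayDec : Prop
  here : Set Q
  anywhere : Set Q

instance [Finite Q] : Finite (Tracker Q) :=
  Finite.of_injective (fun s => (s.mayInc, s.mayDec, s.here, s.anywhere)) <| by
    rintro ⟨⟩ ⟨⟩ h
    simpa only [Prod.mk.injEq, Tracker.mk.injEq] using h

namespace OCA

/-- The `Tracker` at level `x` with the given flags and the given set `here`. -/
def trackerAt (A : OCA Q α) (x : ℕ) (mayInc mayDec : Prop) (T : Set Q) : Tracker Q where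
  mayInc := mayInc
  mayDec := mayDec
  here := T
  anywhere := {q | ∃ p ∈ T, A.Drift univ x p q}

/-- The subset construction for `A` along canonical traces, with complemented acceptance. -/
def complementDevice (A : OCA Q α) : LevelDFA (Tracker Q) α where
  start := A.trackerAt 0 True True (A.statesAt [] 0)
  accept := {s | s.mayInc ∧ s.mayDec ∧ Disjoint s.anywhere A.final}
  next
    | x, .inc, s => A.trackerAt (x + 1) s.mayInc False (A.advance x .inc s.here)
    | x, .dec, s => A.trackerAt (x - 1) False s.mayDec (A.advance x .dec s.here)
    | x, .sym a, s => A.trackerAt x (s.mayInc ∨ s.mayDec) (s.mayInc ∨ s.mayDec)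
        (A.advance x (.sym a) s.here)

theorem complementDevice_next_periodic {A : OCA Q α} {t d : ℕ} (ht : A.m ≤ t)
    (hA : ∀ x, t ≤ x → A.profile univ (x + d) = A.profile univ x) {x : ℕ} (hx : t + 1 ≤ x) :
    A.complementDevice.next (x + d) = A.complementDevice.next x := by
  obtain ⟨x, rfl⟩ := Nat.exists_eq_add_of_le' (show 1 ≤ x by omega)
  have hmin : min (x + 1 + d) A.m = min (x + 1) A.m := by omega
  have hloop {z} (hz : t ≤ z) : A.Loop univ (z + d) = A.Loop univ z := congrArg Prod.fst (hA z hz)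
  have hdrift {z} (hz : t ≤ z) : A.Drift univ (z + d) = A.Drift univ z :=
    congrArg Prod.snd (hA z hz)
  have hinc : x + 1 + d + 1 = x + 2 + d := by omega
  have hdec : x + 1 + d - 1 = x + d := by omega
  funext σ s
  rcases σ with a | _ | _
  · simp only [complementDevice, trackerAt, advance, Vis.nextLevel, hmin,
      hloop (show t ≤ x + 1 by omega), hdrift (show t ≤ x + 1 by omega)]
  · simp only [complementDevice, trackerAt, advance, Vis.nextLevel, hmin, hinc,
      hloop (show t ≤ x + 2 by omega), hdrift (show t ≤ x + 2 by omega)]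
  · simp only [complementDevice, trackerAt, advance, Vis.nextLevel, hmin, hdec,
      hloop (show t ≤ x by omega), hdrift (show t ≤ x by omega), Nat.add_sub_cancel]

/-- The invariant of `complementDevice`: the state it has at level `x` after observing `w`. -/
structure Tracks (A : OCA Q α) (w : List (α × ℕ)) (x : ℕ) (s : Tracker Q) : Prop where
  lastLevel_le : s.mayInc → lastLevel w ≤ x
  le_lastLevel : s.mayDec → x ≤ lastLevel w
  here_eq : s.mayInc ∨ s.mayDec → s.here = A.statesAt w x
  anywhere_eq : s.anywhere = {q | ∃ p ∈ s.here, A.Drift univ x p q}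

variable {A : OCA Q α} {w : List (α × ℕ)} {x y : ℕ} {s : Tracker Q}

theorem Tracks.next (h : A.Tracks w x s) {τ : Vis (α × ℕ)} (hτ : τ.Enabled x) :
    A.Tracks (w ++ obsMap [τ]) ((visOf τ).nextLevel x)
      (A.complementDevice.next x (visOf τ) s) := by
  rcases τ with ⟨a, y⟩ | _ | _
  · obtain rfl : y = x := hτ
    have hlast : lastLevel (w ++ [(a, y)]) = y := lastLevel_concat w a y
    refine ⟨fun _ => hlast.le, fun _ => hlast.ge, fun hs => ?_, rfl⟩
    exact (congrArg _ (h.here_eq (or_self_iff.1 hs))).trans (advance_sym_statesAt a)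
  · simp only [obsMap, List.filterMap, List.append_nil]
    refine ⟨fun hs => (h.lastLevel_le hs).trans x.le_succ, False.elim, fun hs => ?_, rfl⟩
    have hs : s.mayInc := hs.resolve_right id
    exact (congrArg _ (h.here_eq (.inl hs))).trans (advance_inc_statesAt (h.lastLevel_le hs))
  · simp only [obsMap, List.filterMap, List.append_nil]
    obtain ⟨x, rfl⟩ := Nat.exists_eq_add_of_le' hτ
    refine ⟨False.elim, fun hs => x.le_succ.trans (h.le_lastLevel hs), fun hs => ?_, rfl⟩
    have hs : s.mayDec := hs.resolve_left id
    exact (congrArg _ (h.here_eq (.inr hs))).trans (advance_dec_statesAt (h.le_lastLevel hs))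

/-- `A.DeviceReach w x s`: after observing `w`, the complement device can be in state `s` at level
`x`. -/
abbrev DeviceReach (A : OCA Q α) (w : List (α × ℕ)) (x : ℕ) (s : Tracker Q) : Prop :=
  ObsReach A.complementDevice.step (A.complementDevice.start, 0) w (s, x)

theorem tracks_of_obsReach {c : Tracker Q × ℕ}
    (h : ObsReach A.complementDevice.step (A.complementDevice.start, 0) w c) :
    A.Tracks w c.2 c.1 := by
  induction h with
  | init => exact ⟨fun _ => le_rfl, fun _ => le_rfl, fun _ => rfl, rfl⟩
  | tail _ hstep ih =>
    obtain ⟨hτ, rfl⟩ := hstep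
    exact ih.next hτ

theorem DeviceReach.exists_climb (h : A.DeviceReach w x s) (hs : s.mayInc) (hxy : x ≤ y) :
    ∃ s', A.DeviceReach w y s' ∧ s'.mayInc := by
  induction y, hxy using Nat.le_induction with
  | base => exact ⟨s, h, hs⟩
  | succ y _ ih =>
    obtain ⟨s', hreach, hs'⟩ := ih
    exact ⟨_, hreach.tail_inc ⟨trivial, rfl⟩, hs'⟩

theorem DeviceReach.exists_descend (h : A.DeviceReach w x s) (hs : s.mayDec) (hyx : y ≤ x) :
    ∃ s', A.DeviceReach w y s' ∧ s'.mayDec := by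
  induction hyx using Nat.decreasingInduction with
  | self => exact ⟨s, h, hs⟩
  | of_succ y _ ih =>
    obtain ⟨s', hreach, hs'⟩ := ih
    exact ⟨_, hreach.tail_dec ⟨Nat.le_add_left 1 y, rfl⟩, hs'⟩

theorem exists_deviceReach (A : OCA Q α) (w : List (α × ℕ)) :
    ∃ x s, A.DeviceReach w x s ∧ s.mayInc ∧ s.mayDec := by
  induction w using List.reverseRecOn with
  | nil => exact ⟨0, _, .init, trivial, trivial⟩
  | append_singleton w e ih =>
    obtain ⟨a, y⟩ := e
    obtain ⟨x, s, hreach, hinc, hdec⟩ := ih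
    obtain ⟨s', hreach', hs'⟩ : ∃ s', A.DeviceReach w y s' ∧ (s'.mayInc ∨ s'.mayDec) := by
      rcases le_total x y with hxy | hyx
      · exact (hreach.exists_climb hinc hxy).imp fun _ => And.imp_right .inl
      · exact (hreach.exists_descend hdec hyx).imp fun _ => And.imp_right .inr
    exact ⟨y, _, hreach'.tail (τ := .sym (a, y)) ⟨rfl, rfl⟩, hs', hs'⟩

theorem Tracks.mem_anywhere_iff (h : A.Tracks w x s) (hinc : s.mayInc) (hdec : s.mayDec) {q : Q} :
    q ∈ s.anywhere ↔ ∃ z, ObsReach A.step (A.init, 0) w (q, z) := by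
  obtain rfl : x = lastLevel w := (h.le_lastLevel hdec).antisymm (h.lastLevel_le hinc)
  rw [h.anywhere_eq, h.here_eq (.inl hinc)]
  constructor
  · rintro ⟨p, hp, z, hpq⟩
    exact ⟨z, obsReach_of_silentReach hp hpq⟩
  · rintro ⟨z, hq⟩
    obtain ⟨p, hp, hpq⟩ := exists_silentReach_from_lastLevel hq
    exact ⟨p, hp, z, hpq⟩

theorem Tracks.mem_accept_iff (h : A.Tracks w x s) (hinc : s.mayInc) (hdec : s.mayDec) :
    s ∈ A.complementDevice.accept ↔ w ∉ A.Lobs := by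
  have hdisj : Disjoint s.anywhere A.final ↔ w ∉ A.Lobs := by
    simp only [disjoint_left, h.mem_anywhere_iff hinc hdec, mem_Lobs_iff, Prod.exists]
    grind
  exact ⟨fun hs => hdisj.1 hs.2.2, fun hw => ⟨hinc, hdec, hdisj.2 hw⟩⟩

theorem complementDevice_Lobs (A : OCA Q α) : A.complementDevice.Lobs = univ \ A.Lobs := by
  ext w
  constructor
  · rintro ⟨⟨s, x⟩, hreach, hs⟩
    exact ⟨trivial, ((tracks_of_obsReach hreach).mem_accept_iff hs.1 hs.2.1).1 hs⟩
  · rintro ⟨-, hw⟩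
    obtain ⟨x, s, hreach, hinc, hdec⟩ := A.exists_deviceReach w
    exact ⟨(s, x), hreach, ((tracks_of_obsReach hreach).mem_accept_iff hinc hdec).2 hw⟩

end OCA

theorem stmt15_general {α : Type u} {Q : Type v} [Finite Q] (A : OCA Q α) :
    ∃ (Q' : Type v) (_ : Fintype Q') (A' : OCA Q' α),
      A'.Deterministic ∧ A'.Lobs = univ \ A.Lobs := by
  obtain ⟨t, d, ht, hd, hper⟩ := A.exists_profile_periodic
  rw [← A.complementDevice_Lobs]
  exact A.complementDevice.exists_deterministic_Lobs_eq hd fun _ hx =>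
    OCA.complementDevice_next_periodic ht hper hx

/-- complementability wrt. the observability semantics. -/
theorem stmt15 {α Q : Type} [Fintype α] [Nonempty α] [Fintype Q] (A : OCA Q α) :
    ∃ (Q' : Type) (_ : Fintype Q') (A' : OCA Q' α),
      A'.Deterministic ∧ A'.Lobs = Set.univ \ A.Lobs :=
  stmt15_general A
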